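/- Let W be a Coxeter group in which every edge label m(s,t) for distinct generators s,t is either a power of 2 or ∞. Then every element of W of finite order has order a power of 2. -/

import Mathlib

/-!
Work with the larger class of groups generated by involutions subject to relations
`(b c) ^ 2 ^ k = 1`. If every exponent `k` is positive, killing generators is a retraction, which
reduces the problem to finitely many generators, and a last generator `s` can be split off: the
group is `K ⋊ G`, where `G` is generated by the other generators and `K` by the conjugates of `s`
under `G`. The relation `(s t) ^ 2 ^ (k + 1) = 1` says that the involutions `s` and `t s t⁻¹` of `K`
satisfy `(s * t s t⁻¹) ^ 2 ^ k = 1`, so `K` is again in the class, with smaller exponents, after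
identifying the generators related by exponent `0`. Without relations the group embeds in
`FreeGroup B ⋊ ℤˣ`, and having only `2`-torsion passes to extensions.
-/

open Function Relation

section Torsion

variable {p : ℕ} {G H N : Type*} [Group G] [Group H] [Group N]

/-- Every element of finite order has order a power of `p`; as in `IsPGroup`, this is phrased
without `orderOf`, so that it does not involve primality. -/
def HasOnlyPTorsion (p : ℕ) (G : Type*) [Group G] : Prop :=
  ∀ g : G, IsOfFinOrder g → ∃ k : ℕ, g ^ p ^ k = 1

namespace HasOnlyPTorsion

theorem of_isPGroup (hG : IsPGroup p G) : HasOnlyPTorsion p G := fun g _ => hG g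

theorem of_isMulTorsionFree [IsMulTorsionFree G] : HasOnlyPTorsion p G :=
  fun g hg => ⟨0, by simpa using hg.eq_one'⟩

theorem of_injective (hH : HasOnlyPTorsion p H) {f : G →* H} (hf : Injective f) :
    HasOnlyPTorsion p G := fun g hg =>
  (hH (f g) (f.isOfFinOrder hg)).imp fun k hk => hf (by rw [map_pow, hk, map_one])

theorem of_extension (hN : HasOnlyPTorsion p N) (hH : HasOnlyPTorsion p H) {i : N →* G}
    {f : G →* H} (hi : Injective i) (hif : f.ker ≤ i.range) : HasOnlyPTorsion p G := by
  intro g hg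
  obtain ⟨k, hk⟩ := hH (f g) (f.isOfFinOrder hg)
  obtain ⟨x, hx⟩ : g ^ p ^ k ∈ i.range := hif (by rw [MonoidHom.mem_ker, map_pow, hk])
  obtain ⟨j, hj⟩ := hN x (hi.isOfFinOrder_iff.1 (hx ▸ hg.pow))
  exact ⟨k + j, by rw [pow_add, pow_mul, ← hx, ← map_pow, hj, map_one]⟩

theorem semidirectProduct {φ : G →* MulAut N} (hN : HasOnlyPTorsion p N)
    (hG : HasOnlyPTorsion p G) : HasOnlyPTorsion p (N ⋊[φ] G) :=
  hN.of_extension hG SemidirectProduct.inl_injective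
    SemidirectProduct.range_inl_eq_ker_rightHom.ge

theorem orderOf_eq_prime_pow (hG : HasOnlyPTorsion p G) (hp : p.Prime) {g : G}
    (hg : IsOfFinOrder g) : ∃ k : ℕ, orderOf g = p ^ k := by
  obtain ⟨k, hk⟩ := hG g hg
  obtain ⟨j, -, hj⟩ := (Nat.dvd_prime_pow hp).1 (orderOf_dvd_of_pow_eq_one hk)
  exact ⟨j, hj⟩

end HasOnlyPTorsion

end Torsion

section Group

variable {G N : Type*} [Group G]

theorem mul_pow_eq_one_comm {a b : G} {n : ℕ} : (a * b) ^ n = 1 ↔ (b * a) ^ n = 1 := by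
  rw [← conj_eq_one_iff (a := b), ← conj_pow, ← mul_assoc, mul_inv_cancel_right]

theorem pow_two_pow_eq_one {x : G} (hx : x * x = 1) {k : ℕ} (hk : k ≠ 0) : x ^ 2 ^ k = 1 := by
  obtain ⟨j, rfl⟩ := Nat.exists_eq_succ_of_ne_zero hk
  rw [pow_succ', pow_mul, sq, hx, one_pow]

theorem exists_finset_mem_closure_image {ι : Type*} {f : ι → G} {x : G}
    (hx : x ∈ Subgroup.closure (Set.range f)) :
    ∃ T : Finset ι, x ∈ Subgroup.closure (f '' T) := by
  have hmono : Monotone fun T : Finset ι => Subgroup.closure (f '' T) := fun _ _ hTU =>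
    Subgroup.closure_mono (Set.image_mono (Finset.coe_subset.2 hTU))
  refine (Subgroup.mem_iSup_of_directed hmono.directed_le).1
    ((Subgroup.closure_le _).2 ?_ hx)
  rintro _ ⟨i, rfl⟩
  exact Subgroup.mem_iSup_of_mem {i} (Subgroup.subset_closure ⟨i, by simp, rfl⟩)

/-- The action by automorphisms consisting of the endomorphisms `φ g`, used to form semidirect
products. -/
def mulAutOfHom [MulOneClass N] (φ : G → N →* N) (h_one : φ 1 = .id N)
    (h_mul : ∀ g h, φ (g * h) = (φ g).comp (φ h)) : G →* MulAut N where
  toFun g := (φ g).toMulEquiv (φ g⁻¹) (by rw [← h_mul, inv_mul_cancel, h_one])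
    (by rw [← h_mul, mul_inv_cancel, h_one])
  map_one' := by ext x; exact DFunLike.congr_fun h_one x
  map_mul' g h := by ext x; exact DFunLike.congr_fun (h_mul g h) x

@[simp]
theorem mulAutOfHom_apply [MulOneClass N] {φ : G → N →* N} (h_one : φ 1 = .id N)
    (h_mul : ∀ g h, φ (g * h) = (φ g).comp (φ h)) (g : G) (x : N) :
    mulAutOfHom φ h_one h_mul g x = φ g x := rfl

end Group

/-- The group generated by involutions indexed by `B`, with a relation `(b c) ^ 2 ^ k = 1` whenever
`L b c k`. The label `L` is a relation rather than a function, so that a pair of generators may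
carry no exponent, or several. -/
abbrev DyadicCoxeterGroup {B : Type*} (L : B → B → ℕ → Prop) : Type _ :=
  PresentedGroup (Set.range (fun b : B => FreeGroup.of b * FreeGroup.of b) ∪
    {r | ∃ b c k, L b c k ∧ (FreeGroup.of b * FreeGroup.of c) ^ 2 ^ k = r})

namespace DyadicCoxeterGroup

section UniversalProperty

variable {B B' : Type*} {H H' : Type*} [Group H] [Group H']

/-- The values of `f` satisfy the relations of `DyadicCoxeterGroup L`; compare
`CoxeterMatrix.IsLiftable`. -/
structure IsLiftable (L : B → B → ℕ → Prop) (f : B → H) : Prop where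
  mul_self (b : B) : f b * f b = 1
  pow_eq_one {b c : B} {k : ℕ} : L b c k → (f b * f c) ^ 2 ^ k = 1

variable {L : B → B → ℕ → Prop} {L' : B' → B' → ℕ → Prop}

theorem IsLiftable.map {f : B → H} (hf : IsLiftable L f) (φ : H →* H') :
    IsLiftable L (φ ∘ f) where
  mul_self b := by simp only [comp_apply, ← map_mul, hf.mul_self, map_one]
  pow_eq_one h := by simp only [comp_apply, ← map_mul, ← map_pow, hf.pow_eq_one h, map_one]

theorem IsLiftable.comp {f : B' → H} (hf : IsLiftable L' f) {σ : B → B'}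
    (hσ : ∀ b c k, L b c k → L' (σ b) (σ c) k) : IsLiftable L (f ∘ σ) where
  mul_self b := hf.mul_self (σ b)
  pow_eq_one h := hf.pow_eq_one (hσ _ _ _ h)

/-- The generator of `DyadicCoxeterGroup L` with index `b`. -/
def simple (L : B → B → ℕ → Prop) (b : B) : DyadicCoxeterGroup L := PresentedGroup.of b

theorem isLiftable_simple : IsLiftable L (simple L) where
  mul_self b := PresentedGroup.one_of_mem (.inl ⟨b, rfl⟩)
  pow_eq_one h := PresentedGroup.one_of_mem (.inr ⟨_, _, _, h, rfl⟩)

@[simp]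
theorem simple_mul_self (b : B) : simple L b * simple L b = 1 := isLiftable_simple.mul_self b

@[simp]
theorem inv_simple (b : B) : (simple L b)⁻¹ = simple L b :=
  inv_eq_of_mul_eq_one_left (simple_mul_self b)

theorem closure_range_simple : Subgroup.closure (Set.range (simple L)) = ⊤ :=
  PresentedGroup.closure_range_of _

theorem hom_ext {φ ψ : DyadicCoxeterGroup L →* H}
    (h : ∀ b, φ (simple L b) = ψ (simple L b)) : φ = ψ := PresentedGroup.ext h

/-- The homomorphism determined by images of the generators satisfying the relations. -/
def lift {f : B → H} (hf : IsLiftable L f) : DyadicCoxeterGroup L →* H :=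
  PresentedGroup.toGroup (f := f) <| by
    rintro _ (⟨b, rfl⟩ | ⟨b, c, k, h, rfl⟩)
    · simpa using hf.mul_self b
    · simpa using hf.pow_eq_one h

@[simp]
theorem lift_simple {f : B → H} (hf : IsLiftable L f) (b : B) : lift hf (simple L b) = f b :=
  PresentedGroup.toGroup.of _

theorem injective_of_leftInverse {φ : DyadicCoxeterGroup L →* H}
    {ψ : H →* DyadicCoxeterGroup L} (h : ∀ b, ψ (φ (simple L b)) = simple L b) : Injective φ :=
  LeftInverse.injective (DFunLike.congr_fun (hom_ext h : ψ.comp φ = .id _))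

/-- The homomorphism induced by a map of indices preserving the labels. -/
def map (σ : B → B') (hσ : ∀ b c k, L b c k → L' (σ b) (σ c) k) :
    DyadicCoxeterGroup L →* DyadicCoxeterGroup L' :=
  lift (isLiftable_simple.comp hσ)

@[simp]
theorem map_simple {σ : B → B'} (hσ : ∀ b c k, L b c k → L' (σ b) (σ c) k) (b : B) :
    map σ hσ (simple L b) = simple L' (σ b) := lift_simple _ b

end UniversalProperty

section Unlabelled

variable (B : Type*)

/-- The action of `ℤˣ` on a free group in which `-1` inverts all generators. -/
def signAction : ℤˣ →* MulAut (FreeGroup B) :=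
  mulAutOfHom (fun u => FreeGroup.lift fun b => FreeGroup.of b ^ (u : ℤ))
    (FreeGroup.ext_hom _ _ fun b => by simp)
    (fun u v => FreeGroup.ext_hom _ _ fun b => by simp [zpow_mul])

variable {B}

@[simp]
theorem signAction_of (u : ℤˣ) (b : B) :
    signAction B u (FreeGroup.of b) = FreeGroup.of b ^ (u : ℤ) := by
  simp [signAction]

theorem hasOnlyPTorsion_two_of_unlabelled {L : B → B → ℕ → Prop} (hL : ∀ b c k, ¬ L b c k) :
    HasOnlyPTorsion 2 (DyadicCoxeterGroup L) := by
  let ofSimple : B → FreeGroup B ⋊[signAction B] ℤˣ := fun b => ⟨FreeGroup.of b, -1⟩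
  have hofSimple : IsLiftable L ofSimple :=
    ⟨fun b => by ext <;> simp [ofSimple], fun h => (hL _ _ _ h).elim⟩
  let back : FreeGroup B ⋊[signAction B] ℤˣ →* DyadicCoxeterGroup L :=
    SemidirectProduct.lift (FreeGroup.lift (simple L)) 1 fun u => by
      ext b
      obtain rfl | rfl := Int.units_eq_one_or u <;> simp
  have hinj : Injective (lift hofSimple) := injective_of_leftInverse (ψ := back) fun b => by
    simp [ofSimple, back, SemidirectProduct.mk_eq_inl_mul_inr]
  have hunits : IsPGroup 2 ℤˣ := .of_card (n := 1) (by simp)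
  exact (HasOnlyPTorsion.of_isMulTorsionFree.semidirectProduct
    (.of_isPGroup hunits)).of_injective hinj

end Unlabelled

section Collapse

variable {B : Type*} {p : ℕ}

/-- The positive labels on the classes of generators identified by labels `0`. -/
def collapse (L : B → B → ℕ → Prop) (x y : Quot fun b c => L b c 0) (k : ℕ) : Prop :=
  k ≠ 0 ∧ Relation.Map (L · · k) (Quot.mk _) (Quot.mk _) x y

theorem not_collapse_zero (L : B → B → ℕ → Prop) (x y : Quot fun b c => L b c 0) :
    ¬ collapse L x y 0 := fun h => h.1 rfl

theorem le_of_collapse {L : B → B → ℕ → Prop} {n : ℕ} (hn : ∀ b c k, L b c k → k ≤ n)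
    (x y : Quot fun b c => L b c 0) (k : ℕ) : collapse L x y k → k ≤ n := by
  rintro ⟨-, b, c, hk, -, -⟩
  exact hn b c k hk

theorem hasOnlyPTorsion_of_collapse {L : B → B → ℕ → Prop}
    (h : HasOnlyPTorsion p (DyadicCoxeterGroup (collapse L))) :
    HasOnlyPTorsion p (DyadicCoxeterGroup L) := by
  have hmk : IsLiftable L (simple (collapse L) ∘ Quot.mk _) := by
    refine ⟨fun b => simple_mul_self _, fun {b c k} hk => ?_⟩
    obtain rfl | hk₀ := eq_or_ne k 0
    · simp [Quot.sound (r := fun b c => L b c 0) hk]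
    · exact isLiftable_simple.pow_eq_one ⟨hk₀, b, c, hk, rfl, rfl⟩
  have heq (b c : B) (hbc : L b c 0) : simple L b = simple L c := by
    have := isLiftable_simple.pow_eq_one hbc
    rwa [pow_zero, pow_one, mul_eq_one_iff_eq_inv, inv_simple] at this
  have hsection : IsLiftable (collapse L) (Quot.lift (simple L) heq) := by
    refine ⟨Quot.ind simple_mul_self, ?_⟩
    rintro _ _ k ⟨-, b, c, hk, rfl, rfl⟩
    exact isLiftable_simple.pow_eq_one hk
  exact h.of_injective (f := lift hmk) <| injective_of_leftInverse (ψ := lift hsection) (by simp)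

end Collapse

section Restrict

variable {A B : Type*} {L : B → B → ℕ → Prop} {p : ℕ}

/-- Extending `f` by `1` respects a label with a positive exponent even if only one of the two
generators survives. -/
theorem IsLiftable.extend {H : Type*} [Group H] {ι : A → B} {f : A → H}
    (hf : IsLiftable (L on ι) f) (hL : ∀ b c, ¬ L b c 0) (hι : Injective ι) :
    IsLiftable L (extend ι f 1) := by
  have mul_self (b : B) : Function.extend ι f 1 b * Function.extend ι f 1 b = 1 := by
    by_cases hb : ∃ a, ι a = b
    · obtain ⟨a, rfl⟩ := hb
      rw [hι.extend_apply, hf.mul_self]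
    · rw [extend_apply' _ _ _ hb, Pi.one_apply, one_mul]
  refine ⟨mul_self, fun {b c k} hk => ?_⟩
  have hk₀ : k ≠ 0 := by
    rintro rfl
    exact hL b c hk
  by_cases hb : ∃ a, ι a = b
  · by_cases hc : ∃ a, ι a = c
    · obtain ⟨⟨a, rfl⟩, ⟨a', rfl⟩⟩ := hb, hc
      rw [hι.extend_apply, hι.extend_apply]
      exact hf.pow_eq_one hk
    · rw [extend_apply' _ _ c hc, Pi.one_apply, mul_one, pow_two_pow_eq_one (mul_self b) hk₀]
  · rw [extend_apply' _ _ b hb, Pi.one_apply, one_mul, pow_two_pow_eq_one (mul_self c) hk₀]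

theorem map_injective (hL : ∀ b c, ¬ L b c 0) {ι : A → B} (hι : Injective ι) :
    Injective (map ι fun _ _ _ h => h : DyadicCoxeterGroup (L on ι) →* DyadicCoxeterGroup L) :=
  injective_of_leftInverse (ψ := lift (isLiftable_simple.extend hL hι)) fun a => by
    rw [map_simple, lift_simple, hι.extend_apply]

theorem hasOnlyPTorsion_of_finset (hL : ∀ b c, ¬ L b c 0)
    (h : ∀ T : Finset B, HasOnlyPTorsion p (DyadicCoxeterGroup (L on ((↑) : T → B)))) :
    HasOnlyPTorsion p (DyadicCoxeterGroup L) := by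
  intro w hw
  obtain ⟨T, hT⟩ := exists_finset_mem_closure_image (f := simple L) (x := w)
    (closure_range_simple ▸ Subgroup.mem_top w)
  let incl : DyadicCoxeterGroup (L on ((↑) : T → B)) →* DyadicCoxeterGroup L :=
    map (↑) fun _ _ _ h => h
  have hle : Subgroup.closure (simple L '' T) ≤ incl.range := by
    rw [Subgroup.closure_le]
    rintro _ ⟨b, hb, rfl⟩
    exact ⟨simple _ ⟨b, hb⟩, map_simple _ _⟩
  obtain ⟨u, rfl⟩ := hle hT
  have hu : IsOfFinOrder u := (map_injective hL Subtype.val_injective).isOfFinOrder_iff.1 hw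
  exact (h T u hu).imp fun k hk => by rw [← map_pow, hk, map_one]

end Restrict

section SplitGenerator

variable {B : Type*} (L : Option B → Option B → ℕ → Prop)

/-- The labels of the conjugates `g s g⁻¹` of the generator `s` with index `none`, indexed by the
elements `g` of the group `G` on the other generators: `g s g⁻¹` and `(g t) s (g t)⁻¹` have label
`k` if `s` and the generator `t` have label `k + 1` in some order. -/
def conjugateLabel (x y : DyadicCoxeterGroup (L on some)) (k : ℕ) : Prop :=
  ∃ b, SymmGen (L · · (k + 1)) none (some b) ∧ y = x * simple _ b

/-- The group on the other generators acts on the conjugates of the generator `none`. -/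
def conjugateAction :
    DyadicCoxeterGroup (L on some) →* MulAut (DyadicCoxeterGroup (conjugateLabel L)) :=
  mulAutOfHom
    (fun g => map (g * ·) <| by
      rintro x _ k ⟨b, hb, rfl⟩
      exact ⟨b, hb, (mul_assoc g x _).symm⟩)
    (hom_ext fun x => by simp)
    (fun g h => hom_ext fun x => by simp [mul_assoc])

@[simp]
theorem conjugateAction_simple (g x : DyadicCoxeterGroup (L on some)) :
    conjugateAction L g (simple _ x) = simple _ (g * x) := by
  simp [conjugateAction]

/-- The images of the generators in the semidirect product which splits off the generator
`none`. -/
def splitSimple :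
    Option B → DyadicCoxeterGroup (conjugateLabel L) ⋊[conjugateAction L]
      DyadicCoxeterGroup (L on some)
  | none => .inl (simple _ 1)
  | some b => .inr (simple _ b)

variable {L}

theorem le_of_conjugateLabel {n : ℕ} (hn : ∀ b c k, L b c k → k ≤ n + 1)
    (x y : DyadicCoxeterGroup (L on some)) (k : ℕ) : conjugateLabel L x y k → k ≤ n := by
  rintro ⟨b, hk | hk, -⟩ <;> exact Nat.le_of_succ_le_succ (hn _ _ _ hk)

theorem splitSimple_mul_self (o : Option B) : splitSimple L o * splitSimple L o = 1 := by
  cases o <;> simp only [splitSimple, ← map_mul, simple_mul_self, map_one]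

theorem splitSimple_none_mul_some_sq (b : B) :
    (splitSimple L none * splitSimple L (some b)) ^ 2 =
      .inl (simple _ 1 * simple _ (simple _ b)) := by
  ext <;> simp [splitSimple, sq]

theorem splitSimple_none_mul_some_pow (hL : ∀ b c, ¬ L b c 0) {b : B} {k : ℕ}
    (hk : SymmGen (L · · k) none (some b)) :
    (splitSimple L none * splitSimple L (some b)) ^ 2 ^ k = 1 := by
  cases k with
  | zero => exact (hk.elim (hL _ _) (hL _ _)).elim
  | succ k =>
    have hlabel : conjugateLabel L 1 (simple _ b) k := ⟨b, hk, (one_mul _).symm⟩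
    rw [pow_succ', pow_mul, splitSimple_none_mul_some_sq, ← map_pow,
      isLiftable_simple.pow_eq_one hlabel, map_one]

theorem isLiftable_splitSimple (hL : ∀ b c, ¬ L b c 0) : IsLiftable L (splitSimple L) where
  mul_self := splitSimple_mul_self
  pow_eq_one {o o' k} hk := by
    match o, o' with
    | none, none => rw [splitSimple_mul_self, one_pow]
    | none, some b => exact splitSimple_none_mul_some_pow hL (.inl hk)
    | some b, none => exact mul_pow_eq_one_comm.1 (splitSimple_none_mul_some_pow hL (.inr hk))
    | some b, some c =>
      exact (isLiftable_simple (L := L on some).map SemidirectProduct.inr).pow_eq_one hk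

/-- The inclusion of the group on the generators other than `none`. -/
def inclSome : DyadicCoxeterGroup (L on some) →* DyadicCoxeterGroup L := map some fun _ _ _ h => h

theorem isLiftable_conj_simple_none :
    IsLiftable (conjugateLabel L) fun g => MulAut.conj (inclSome g) (simple L none) where
  mul_self g := by rw [← map_mul, simple_mul_self, map_one]
  pow_eq_one := by
    rintro g _ k ⟨b, hb, rfl⟩
    have hsb : (simple L none * simple L (some b)) ^ 2 ^ (k + 1) = 1 :=
      hb.elim isLiftable_simple.pow_eq_one
        fun h => mul_pow_eq_one_comm.1 (isLiftable_simple.pow_eq_one h)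
    have hsq : simple L none * MulAut.conj (simple L (some b)) (simple L none) =
        (simple L none * simple L (some b)) ^ 2 := by
      rw [MulAut.conj_apply, inv_simple, sq]
      group
    rw [map_mul, map_mul, MulAut.mul_apply, ← map_mul, ← map_pow, inclSome, map_simple, hsq,
      ← pow_mul, ← pow_succ', hsb, map_one]

theorem hasOnlyPTorsion_of_splitGenerator {p : ℕ} (hL : ∀ b c, ¬ L b c 0)
    (hK : HasOnlyPTorsion p (DyadicCoxeterGroup (conjugateLabel L)))
    (hG : HasOnlyPTorsion p (DyadicCoxeterGroup (L on some))) :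
    HasOnlyPTorsion p (DyadicCoxeterGroup L) := by
  let back : DyadicCoxeterGroup (conjugateLabel L) ⋊[conjugateAction L]
      DyadicCoxeterGroup (L on some) →* DyadicCoxeterGroup L :=
    SemidirectProduct.lift (lift isLiftable_conj_simple_none) inclSome fun g =>
      hom_ext fun x => by simp [mul_assoc]
  refine (hK.semidirectProduct hG).of_injective (f := lift (isLiftable_splitSimple hL)) <|
    injective_of_leftInverse (ψ := back) fun o => ?_
  cases o <;> simp [back, splitSimple, inclSome]

end SplitGenerator

section Bounded

universe u

theorem hasOnlyPTorsion_of_finite {p n : ℕ}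
    (ih : ∀ {A : Type u} {K : A → A → ℕ → Prop}, (∀ b c k, K b c k → k ≤ n) →
      HasOnlyPTorsion p (DyadicCoxeterGroup K))
    {B : Type u} [Finite B] {L : B → B → ℕ → Prop} (hL : ∀ b c, ¬ L b c 0)
    (hn : ∀ b c k, L b c k → k ≤ n + 1) : HasOnlyPTorsion p (DyadicCoxeterGroup L) := by
  induction B using Finite.induction_empty_option with
  | of_equiv e hA =>
    have hsymm : ∀ b c k, L b c k → (L on e) (e.symm b) (e.symm c) k := by simp [onFun]
    exact (hA (fun _ _ => hL _ _) fun _ _ => hn _ _).of_injective (f := map e.symm hsymm) <|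
      injective_of_leftInverse (ψ := map e fun _ _ _ h => h) (by simp)
  | h_empty => exact ih nofun
  | h_option hA =>
    exact hasOnlyPTorsion_of_splitGenerator hL (ih (le_of_conjugateLabel hn))
      (hA (fun _ _ => hL _ _) fun _ _ => hn _ _)

theorem hasOnlyPTorsion_two_of_bounded {n : ℕ} {B : Type u} {L : B → B → ℕ → Prop}
    (hL : ∀ b c, ¬ L b c 0) (hn : ∀ b c k, L b c k → k ≤ n) :
    HasOnlyPTorsion 2 (DyadicCoxeterGroup L) := by
  induction n generalizing B with
  | zero =>
    refine hasOnlyPTorsion_two_of_unlabelled fun b c k hk => hL b c ?_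
    rwa [← Nat.le_zero.1 (hn b c k hk)]
  | succ n ih =>
    have hcollapse {A : Type u} {K : A → A → ℕ → Prop} (hK : ∀ b c k, K b c k → k ≤ n) :
        HasOnlyPTorsion 2 (DyadicCoxeterGroup K) :=
      hasOnlyPTorsion_of_collapse (ih (not_collapse_zero K) (le_of_collapse hK))
    exact hasOnlyPTorsion_of_finset hL fun T =>
      hasOnlyPTorsion_of_finite hcollapse (fun _ _ => hL _ _) fun _ _ => hn _ _

end Bounded

end DyadicCoxeterGroup

section CoxeterSystem

open DyadicCoxeterGroup

variable {B W : Type*} [Group W] {M : CoxeterMatrix B}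

/-- The exponents of the labels of a Coxeter matrix that are powers of `2`. -/
def twoPowLabel (M : CoxeterMatrix B) (s t : B) (k : ℕ) : Prop := s ≠ t ∧ M s t = 2 ^ k

theorem not_twoPowLabel_zero (M : CoxeterMatrix B) (s t : B) : ¬ twoPowLabel M s t 0 :=
  fun h => M.off_diagonal s t h.1 h.2

theorem isLiftable_simple_twoPowLabel
    (h : ∀ s t : B, s ≠ t → M s t = 0 ∨ ∃ k : ℕ, M s t = 2 ^ k) :
    M.IsLiftable (simple (twoPowLabel M)) := by
  intro s t
  obtain rfl | hst := eq_or_ne s t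
  · rw [simple_mul_self, one_pow]
  · obtain h₀ | ⟨k, hk⟩ := h s t hst
    · rw [h₀, pow_zero]
    · rw [hk, isLiftable_simple.pow_eq_one ⟨hst, hk⟩]

theorem isLiftable_twoPowLabel_simple (cs : CoxeterSystem M W) :
    DyadicCoxeterGroup.IsLiftable (twoPowLabel M) cs.simple where
  mul_self := cs.simple_mul_simple_self
  pow_eq_one h := by rw [← h.2, cs.simple_mul_simple_pow]

theorem hasOnlyPTorsion_two_twoPowLabel (M : CoxeterMatrix B) :
    HasOnlyPTorsion 2 (DyadicCoxeterGroup (twoPowLabel M)) := by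
  refine hasOnlyPTorsion_of_finset (not_twoPowLabel_zero M) fun T => ?_
  obtain ⟨n, hn⟩ := (Set.finite_range fun b : T × T => M b.1 b.2).bddAbove
  refine hasOnlyPTorsion_two_of_bounded (n := n) (fun _ _ => not_twoPowLabel_zero M _ _) ?_
  intro b c k hk
  calc k ≤ 2 ^ k := Nat.lt_two_pow_self.le
    _ = M b c := hk.2.symm
    _ ≤ n := hn ⟨(b, c), rfl⟩

theorem orderOf_two_pow_of_two_power_labels_general (cs : CoxeterSystem M W)
    (h : ∀ s t : B, s ≠ t → M s t = 0 ∨ ∃ k : ℕ, M s t = 2 ^ k) {w : W} (hw : IsOfFinOrder w) :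
    ∃ k : ℕ, orderOf w = 2 ^ k := by
  let toDyadic : W →* DyadicCoxeterGroup (twoPowLabel M) :=
    cs.lift ⟨_, isLiftable_simple_twoPowLabel h⟩
  let back : DyadicCoxeterGroup (twoPowLabel M) →* W := lift (isLiftable_twoPowLabel_simple cs)
  have hback : back.comp toDyadic = .id W := cs.ext_simple fun s => by simp [back, toDyadic]
  have hinj : Injective toDyadic := LeftInverse.injective (DFunLike.congr_fun hback)
  exact ((hasOnlyPTorsion_two_twoPowLabel M).of_injective hinj).orderOf_eq_prime_pow
    Nat.prime_two hw

end CoxeterSystem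

/-- If every off-diagonal entry of the Coxeter matrix of `W` is a power of `2` or `∞`
(encoded as `0`), then every element of `W` of finite order has order a power of `2`. -/
theorem orderOf_two_pow_of_two_power_labels {B : Type} {W : Type} [Group W]
    (M : CoxeterMatrix B) (cs : CoxeterSystem M W)
    (h : ∀ s t : B, s ≠ t → M s t = 0 ∨ ∃ k : ℕ, 1 ≤ k ∧ M s t = 2 ^ k)
    (w : W) (hw : IsOfFinOrder w) :
    ∃ k : ℕ, orderOf w = 2 ^ k :=
  orderOf_two_pow_of_two_power_labels_general cs
    (fun s t hst => (h s t hst).imp_right fun ⟨k, _, hk⟩ => ⟨k, hk⟩) hw
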